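/- arXiv:0710.1902 — 2 statements merged into one kernel-verified Lean document; each statement's English description precedes it below -/
import Mathlib

section
/- Let f = x^n + x^{−n} for a positive integer n, and suppose g, h ∈ ℂ(x) satisfy g ∘ h = f. Then there exist a divisor d of n and a degree-one μ ∈ ℂ(x) such that either (1) g ∘ μ = x^{n/d} + x^{−n/d} and μ^{−1} ∘ h = x^d, or (2) g ∘ μ = β^n D_{n/d} and μ^{−1} ∘ h = (x/β)^d + (β/x)^d for some β ∈ ℂ with β^{2n} = 1. -/
open Polynomial

noncomputable def rcomp (f g : RatFunc ℂ) : RatFunc ℂ :=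
  RatFunc.eval (algebraMap ℂ (RatFunc ℂ)) g f

/-- A Laurent polynomial: a rational function whose only poles are `0` and `∞`. -/
def IsLaurent (f : RatFunc ℂ) : Prop :=
  ∃ (p : Polynomial ℂ) (k : ℕ),
    f = algebraMap (Polynomial ℂ) (RatFunc ℂ) p / RatFunc.X ^ k

/-- A degree-one (Möbius) rational function. -/
def IsMobius (μ : RatFunc ℂ) : Prop :=
  ∃ a b c d : ℂ, a * d - b * c ≠ 0 ∧
    μ = (RatFunc.C a * RatFunc.X + RatFunc.C b) / (RatFunc.C c * RatFunc.X + RatFunc.C d)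

/-!
Write `f = x ^ n + x ^ (-n)`, so that `K(f) ⊆ K(h) ⊆ K(x)`. When `K` contains the `n`-th roots of
unity, `K(x) / K(f)` is Galois with dihedral group generated by the maps `x ↦ ζ x` (`ζ ^ n = 1`)
and `x ↦ 1 / x`. The automorphisms fixing `h` form a subgroup whose scalings are those by the
`d`-th roots of unity for some `d ∣ n`. If there is nothing else, the subgroup is the one fixing
`x ^ d`; if it contains a reflection `x ↦ β ^ 2 / x`, it is the one fixing
`(x / β) ^ d + (β / x) ^ d`. So `h` generates the same field as one of these two functions, and two
generators of the same field differ by a fractional linear transformation.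
-/

open IntermediateField

section Composition

variable {K : Type*} [Field K]

/-- The composition `f ∘ g` of rational functions over a field. It inherits the convention
`x / 0 = 0` when `g` is a constant at which the denominator of `f` vanishes. -/
noncomputable def ratComp (f g : RatFunc K) : RatFunc K :=
  RatFunc.eval (algebraMap K (RatFunc K)) g f

/-- A fractional linear transformation, that is, a rational function of degree one. -/
def IsLinearFractional (μ : RatFunc K) : Prop :=
  ∃ a b c d : K, a * d - b * c ≠ 0 ∧
    μ = (RatFunc.C a * RatFunc.X + RatFunc.C b) / (RatFunc.C c * RatFunc.X + RatFunc.C d)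

/-- Composition with a transcendental rational function `c` on the right, as a homomorphism. -/
noncomputable def ratCompHom (c : RatFunc K) (hc : Transcendental K c) :
    RatFunc K →ₐ[K] RatFunc K :=
  K⟮c⟯.val.comp (RatFunc.algEquivOfTranscendental c hc).toAlgHom

lemma ratCompHom_apply {c : RatFunc K} (hc : Transcendental K c) (f : RatFunc K) :
    ratCompHom c hc f = ratComp f c :=
  RatFunc.algEquivOfTranscendental_apply c hc f

lemma ratComp_X (f : RatFunc K) : ratComp f RatFunc.X = f := by
  have eval₂_X (p : K[X]) : p.eval₂ (algebraMap K (RatFunc K)) RatFunc.X = algebraMap _ _ p :=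
    RatFunc.aeval_X_left_eq_algebraMap p
  rw [ratComp, RatFunc.eval, eval₂_X, eval₂_X, RatFunc.num_div_denom]

lemma X_ratComp (f : RatFunc K) : ratComp RatFunc.X f = f :=
  RatFunc.eval_X _ _

lemma map_ratComp (φ : RatFunc K →ₐ[K] RatFunc K) (f g : RatFunc K) :
    φ (ratComp f g) = ratComp f (φ g) := by
  have map_eval₂ (p : K[X]) : φ (p.eval₂ (algebraMap K (RatFunc K)) g) =
      p.eval₂ (algebraMap K (RatFunc K)) (φ g) :=
    (Polynomial.aeval_algHom_apply φ g p).symm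
  rw [ratComp, ratComp, RatFunc.eval, RatFunc.eval, map_div₀, map_eval₂, map_eval₂]

lemma ratComp_assoc (f g : RatFunc K) {h : RatFunc K} (hh : Transcendental K h) :
    ratComp (ratComp f g) h = ratComp f (ratComp g h) := by
  simpa only [ratCompHom_apply] using map_ratComp (ratCompHom h hh) f g

lemma ratComp_left_injective {h : RatFunc K} (hh : Transcendental K h) :
    Function.Injective fun f => ratComp f h := fun f g hfg =>
  (ratCompHom h hh).injective <|
    (ratCompHom_apply hh f).trans <| hfg.trans (ratCompHom_apply hh g).symm

lemma ratComp_mem_adjoin (f g : RatFunc K) : ratComp f g ∈ K⟮g⟯ :=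
  (mem_adjoin_simple_iff K _).2 ⟨f.num, f.denom, rfl⟩

lemma exists_ratComp_eq_of_mem_adjoin {h z : RatFunc K} (hh : Transcendental K h)
    (hz : z ∈ K⟮h⟯) : ∃ f, ratComp f h = z :=
  ⟨(RatFunc.algEquivOfTranscendental h hh).symm ⟨z, hz⟩, by
    rw [← ratCompHom_apply hh]
    simp [ratCompHom]⟩

lemma transcendental_of_ratComp {f g : RatFunc K} (hfg : Transcendental K (ratComp f g)) :
    Transcendental K g := fun hg =>
  have : Algebra.IsAlgebraic K K⟮g⟯ := isAlgebraic_adjoin_simple hg.isIntegral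
  hfg ((isAlgebraic_iff (x := ⟨_, ratComp_mem_adjoin f g⟩)).1 (Algebra.IsAlgebraic.isAlgebraic _))

lemma mul_sub_mul_ne_zero_of_isCoprime_linear {R : Type*} [CommRing R] [IsDomain R]
    {a b c d : R}
    (hcop : IsCoprime (C a * X + C b : R[X]) (C c * X + C d)) (hac : a ≠ 0 ∨ c ≠ 0) :
    a * d - b * c ≠ 0 := by
  intro hdet
  have eq_zero_of_linear_dvd {r s : R} (hdvd : (C r * X + C s : R[X]) ∣ C r) : r = 0 := by
    by_contra hr
    have hdeg := natDegree_le_of_dvd hdvd (C_ne_zero.2 hr)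
    rw [natDegree_linear hr, natDegree_C] at hdeg
    omega
  have hprop : (C a * X + C b) * C c = C a * (C c * X + C d : R[X]) := by
    have hC : (C a * C d : R[X]) = C b * C c := by rw [← C_mul, ← C_mul, sub_eq_zero.1 hdet]
    linear_combination -hC
  have ha : a = 0 := eq_zero_of_linear_dvd (hcop.dvd_of_dvd_mul_right ⟨_, hprop.symm⟩)
  have hc : c = 0 := eq_zero_of_linear_dvd <|
    hcop.symm.dvd_of_dvd_mul_left ⟨_, by rw [hprop, mul_comm]⟩
  exact hac.elim (· ha) (· hc)

lemma isLinearFractional_of_adjoin_eq_top {μ : RatFunc K} (hμ : K⟮μ⟯ = ⊤) :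
    IsLinearFractional μ := by
  have hdeg : max μ.num.natDegree μ.denom.natDegree = 1 := by
    rw [← RatFunc.finrank_eq_max_natDegree, hμ, IntermediateField.finrank_top]
  obtain ⟨a, b, hnum⟩ := Polynomial.exists_eq_X_add_C_of_natDegree_le_one
    ((le_max_left _ _).trans hdeg.le)
  obtain ⟨c, d, hdenom⟩ := Polynomial.exists_eq_X_add_C_of_natDegree_le_one
    ((le_max_right _ _).trans hdeg.le)
  refine ⟨a, b, c, d, mul_sub_mul_ne_zero_of_isCoprime_linear ?_ ?_, ?_⟩
  · rw [← hnum, ← hdenom]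
    exact μ.isCoprime_num_denom
  · by_contra! hac
    rw [hnum, hdenom, hac.1, hac.2] at hdeg
    simp at hdeg
  · rw [← RatFunc.num_div_denom μ, hnum, hdenom]
    simp [RatFunc.algebraMap_X, RatFunc.algebraMap_C]

lemma exists_isLinearFractional_of_adjoin_eq {g h f u : RatFunc K}
    (hgh : Transcendental K (ratComp g h)) (hfu : ratComp f u = ratComp g h)
    (hadjoin : K⟮u⟯ = K⟮h⟯) :
    ∃ μ ν : RatFunc K, IsLinearFractional μ ∧ ratComp μ ν = RatFunc.X ∧
      ratComp ν μ = RatFunc.X ∧ ratComp g μ = f ∧ ratComp ν h = u := by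
  have hh : Transcendental K h := transcendental_of_ratComp hgh
  have hu : Transcendental K u := transcendental_of_ratComp (hfu ▸ hgh)
  obtain ⟨μ, hμ⟩ := exists_ratComp_eq_of_mem_adjoin hu (hadjoin ▸ mem_adjoin_simple_self K h)
  obtain ⟨ν, hν⟩ := exists_ratComp_eq_of_mem_adjoin hh (hadjoin ▸ mem_adjoin_simple_self K u)
  have hμν : ratComp μ ν = RatFunc.X := ratComp_left_injective hh <| by
    simp only [ratComp_assoc _ _ hh, hν, hμ, X_ratComp]
  have hνμ : ratComp ν μ = RatFunc.X := ratComp_left_injective hu <| by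
    simp only [ratComp_assoc _ _ hu, hν, hμ, X_ratComp]
  have hgμ : ratComp g μ = f := ratComp_left_injective hu <| by
    simp only [ratComp_assoc _ _ hu, hμ, hfu]
  have adjoin_μ : K⟮μ⟯ = ⊤ := by
    rw [_root_.eq_top_iff, ← RatFunc.adjoin_X, adjoin_simple_le_iff, ← hνμ]
    exact ratComp_mem_adjoin ν μ
  exact ⟨μ, ν, isLinearFractional_of_adjoin_eq_top adjoin_μ, hμν, hνμ, hgμ, hν⟩

end Composition

section RootsOfUnity

lemma exists_dvd_eq_rootsOfUnity {R : Type*} [CommRing R] [IsDomain R] {n : ℕ} [NeZero n]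
    {A : Subgroup Rˣ} (hA : A ≤ rootsOfUnity n R) : ∃ d, d ∣ n ∧ A = rootsOfUnity d R := by
  have : Finite A := Finite.of_injective _ (Subgroup.inclusion_injective hA)
  have : NeZero (Nat.card A) := ⟨Nat.card_pos.ne'⟩
  have card_dvd : Nat.card A ∣ n := by
    rw [← IsCyclic.exponent_eq_card]
    exact Monoid.exponent_dvd_of_forall_pow_eq_one fun a => Subtype.ext (hA a.2)
  have le_roots : A ≤ rootsOfUnity (Nat.card A) R := fun a ha =>
    congrArg Subtype.val (pow_card_eq_one' (x := (⟨a, ha⟩ : A)))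
  refine ⟨Nat.card A, card_dvd, Subgroup.eq_of_le_of_card_ge le_roots ?_⟩
  exact card_rootsOfUnity R _

lemma add_inv_eq_add_inv_iff {L : Type*} [Field L] {a b : L} (ha : a ≠ 0) (hb : b ≠ 0) :
    a + a⁻¹ = b + b⁻¹ ↔ a = b ∨ a = b⁻¹ := by
  have factorization : (a + a⁻¹ - (b + b⁻¹)) * a = (a - b) * (a - b⁻¹) := by
    field_simp
    ring
  rw [← sub_eq_zero, ← sub_eq_zero (a := a) (b := b), ← sub_eq_zero (a := a) (b := b⁻¹),
    ← mul_eq_zero, ← factorization, mul_eq_zero, or_iff_left ha]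

variable {K : Type*} [Field K] {d : ℕ} [NeZero d]

lemma ratFunc_pow_eq_pow_iff {u v : RatFunc K} :
    u ^ d = v ^ d ↔ ∃ ζ ∈ rootsOfUnity d K, u = RatFunc.C (ζ : K) * v := by
  refine ⟨fun huv => ?_, ?_⟩
  · rcases eq_or_ne v 0 with rfl | hv
    · exact ⟨1, one_mem _, by simpa [NeZero.ne d] using huv⟩
    have quot_pow : (u / v) ^ d = 1 := by rw [div_pow, huv, div_self (pow_ne_zero d hv)]
    have quot_alg : IsAlgebraic K (u / v) :=
      .of_pow (Nat.pos_of_neZero d) (quot_pow ▸ isAlgebraic_one)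
    obtain ⟨ζ, hζ⟩ : ∃ ζ, u / v = RatFunc.C ζ := by
      by_contra! hne
      exact RatFunc.transcendental_of_ne_C _ (not_exists.2 hne) quot_alg
    have hζd : ζ ^ d = 1 := RatFunc.C_injective (by rw [map_pow, ← hζ, quot_pow, map_one])
    refine ⟨rootsOfUnity.mkOfPowEq ζ hζd, (rootsOfUnity.mkOfPowEq ζ hζd).2, ?_⟩
    simp [← hζ, hv]
  · rintro ⟨ζ, hζ, rfl⟩
    rw [mul_pow, ← map_pow, (mem_rootsOfUnity' d ζ).1 hζ, map_one, one_mul]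

end RootsOfUnity

section Galois

variable {F L : Type*} [Field F] [Field L] [Algebra F L]

lemma isGalois_of_pow_add_inv_pow_eq {n : ℕ} [NeZero n] {ζ a : L} {t : F}
    (hζ : IsPrimitiveRoot ζ n) (ha : a ≠ 0) (hapow : a ^ n ≠ (a ^ n)⁻¹) (htop : F⟮a⟯ = ⊤)
    (ht : algebraMap F L t = a ^ n + (a ^ n)⁻¹) : IsGalois F L := by
  have : NeZero (n : L) := hζ.neZero'
  let P : F[X] := X ^ (2 * n) - C t * X ^ n + 1
  have hP : P.map (algebraMap F L) = (X ^ n - C (a ^ n)) * (X ^ n - C (a ^ n)⁻¹) := by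
    have hC : C (a ^ n) * C (a ^ n)⁻¹ = 1 := by
      rw [← C_mul, mul_inv_cancel₀ (pow_ne_zero n ha), C_1]
    simp only [P, Polynomial.map_add, Polynomial.map_sub, Polynomial.map_mul, Polynomial.map_pow,
      map_X, map_C, Polynomial.map_one, ht, C_add]
    linear_combination -hC
  have hsep : P.Separable := by
    rw [← separable_map (algebraMap F L), hP]
    refine (separable_X_pow_sub_C _ (NeZero.ne _) (pow_ne_zero n ha)).mul
      (separable_X_pow_sub_C _ (NeZero.ne _) (inv_ne_zero (pow_ne_zero n ha))) ?_
    simpa only [map_sub, expand_X, expand_C] using (isCoprime_expand (NeZero.ne n)).2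
      (isCoprime_X_sub_C_of_isUnit_sub (sub_ne_zero.2 hapow).isUnit)
  have hsplits : (P.map (algebraMap F L)).Splits := by
    rw [hP]
    exact (X_pow_sub_C_splits_of_isPrimitiveRoot hζ rfl).mul
      (X_pow_sub_C_splits_of_isPrimitiveRoot hζ (inv_pow a n))
  have : P.IsSplittingField F L := by
    refine isSplittingField_iff_intermediateField.2 ⟨hsplits, _root_.eq_top_iff.2 ?_⟩
    rw [← htop, adjoin_simple_le_iff]
    refine subset_adjoin F _ ((mem_rootSet_of_ne hsep.ne_zero).2 ?_)
    rw [← eval_map_algebraMap, hP]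
    simp
  exact IsGalois.of_separable_splitting_field hsep

lemma fixedField_fixingSubgroup_of_isGalois (E : IntermediateField F L) [IsGalois E L] :
    fixedField E.fixingSubgroup = E := by
  refine le_antisymm (fun z hz => ?_) ((le_iff_le _ _).2 le_rfl)
  obtain ⟨y, rfl⟩ := (InfiniteGalois.mem_bot_iff_fixed (k := E) (K := L) z).2 fun σ =>
    hz ⟨σ.restrictScalars F, fun y => σ.commutes y⟩
  exact y.2

lemma mem_fixingSubgroup_adjoin_simple_iff {a : L} {σ : Gal(L/F)} :
    σ ∈ F⟮a⟯.fixingSubgroup ↔ σ a = a := by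
  rw [← Subgroup.zpowers_le, ← le_iff_le, adjoin_simple_le_iff, mem_fixedField_iff]
  exact Subgroup.zpowers_le (H := MulAction.stabilizer Gal(L/F) a)

end Galois

section Automorphisms

variable {K : Type*} [Field K]

/-- The Joukowsky map `z + 1 / z` evaluated at `z = (x / β) ^ d`, that is, the function
`(x / β) ^ d + (β / x) ^ d` of the dihedral case. -/
noncomputable def joukowsky (β : K) (d : ℕ) : RatFunc K :=
  (RatFunc.X / RatFunc.C β) ^ d + ((RatFunc.X / RatFunc.C β) ^ d)⁻¹

lemma map_ratFunc_C (σ : Gal(RatFunc K/K)) (c : K) : σ (RatFunc.C c) = RatFunc.C c :=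
  σ.commutes c

lemma algEquiv_ext_of_map_X_eq {σ τ : Gal(RatFunc K/K)} (h : σ RatFunc.X = τ RatFunc.X) :
    σ = τ := by
  ext f
  rw [← ratComp_X f]
  exact (map_ratComp σ.toAlgHom f _).trans <| h ▸ (map_ratComp τ.toAlgHom f _).symm

lemma C_mul_X_ne_C_div_X {a b : K} (ha : a ≠ 0) :
    (RatFunc.C a * RatFunc.X : RatFunc K) ≠ RatFunc.C b / RatFunc.X := by
  intro h
  have hCa : (RatFunc.C a : RatFunc K) ≠ 0 := by simpa using ha
  have X_sq : (RatFunc.X : RatFunc K) ^ 2 = algebraMap K (RatFunc K) (b / a) := by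
    rw [RatFunc.algebraMap_eq_C, map_div₀, eq_div_iff hCa]
    rw [eq_div_iff RatFunc.X_ne_zero] at h
    linear_combination h
  exact RatFunc.transcendental_X.pow two_pos (X_sq ▸ isAlgebraic_algebraMap _)

variable {d : ℕ} [NeZero d]

lemma map_X_pow_eq_iff {σ : Gal(RatFunc K/K)} :
    σ (RatFunc.X ^ d) = RatFunc.X ^ d ↔
      ∃ ζ ∈ rootsOfUnity d K, σ RatFunc.X = RatFunc.C (ζ : K) * RatFunc.X := by
  rw [map_pow, ratFunc_pow_eq_pow_iff]

lemma map_joukowsky_eq_iff {β : K} (hβ : β ≠ 0) {σ : Gal(RatFunc K/K)} :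
    σ (joukowsky β d) = joukowsky β d ↔ ∃ ζ ∈ rootsOfUnity d K,
      σ RatFunc.X = RatFunc.C (ζ : K) * RatFunc.X ∨
        σ RatFunc.X = RatFunc.C (ζ * β ^ 2) / RatFunc.X := by
  have hCβ : (RatFunc.C β : RatFunc K) ≠ 0 := by simpa using hβ
  have hX : (RatFunc.X : RatFunc K) ≠ 0 := RatFunc.X_ne_zero
  have hσX : σ RatFunc.X ≠ 0 := (map_ne_zero σ).2 hX
  rw [joukowsky, map_add, map_inv₀, map_pow, map_div₀, map_ratFunc_C,
    add_inv_eq_add_inv_iff (pow_ne_zero d (div_ne_zero hσX hCβ))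
      (pow_ne_zero d (div_ne_zero hX hCβ)), ← inv_pow,
    ratFunc_pow_eq_pow_iff, ratFunc_pow_eq_pow_iff, ← exists_or]
  refine exists_congr fun ζ => ?_
  rw [← and_or_left]
  refine and_congr_right fun _ => or_congr ?_ ?_
  · rw [div_eq_iff hCβ, mul_assoc, div_mul_cancel₀ _ hCβ]
  · rw [div_eq_iff hCβ, map_mul, map_pow]
    field_simp

end Automorphisms

section Subgroups

variable {K : Type*} [Field K]

/-- The scalars `ζ` for which the substitution `x ↦ ζ x` belongs to a group `H` of automorphisms
of the field of rational functions. -/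
def scalingSubgroup (H : Subgroup Gal(RatFunc K/K)) : Subgroup Kˣ where
  carrier := {ζ | ∃ σ ∈ H, σ RatFunc.X = RatFunc.C (ζ : K) * RatFunc.X}
  one_mem' := ⟨1, one_mem H, by simp⟩
  mul_mem' := by
    rintro ζ η ⟨σ, hσ, hσX⟩ ⟨τ, hτ, hτX⟩
    refine ⟨σ * τ, mul_mem hσ hτ, ?_⟩
    rw [AlgEquiv.mul_apply, hτX, map_mul, map_ratFunc_C, hσX, Units.val_mul, map_mul]
    ring
  inv_mem' := by
    rintro ζ ⟨σ, hσ, hσX⟩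
    refine ⟨σ⁻¹, inv_mem hσ, σ.symm_apply_eq.2 ?_⟩
    rw [map_mul, map_ratFunc_C, hσX, ← mul_assoc, ← map_mul, ζ.inv_mul, map_one, one_mul]

variable {H : Subgroup Gal(RatFunc K/K)} {σ τ : Gal(RatFunc K/K)}

lemma mem_scalingSubgroup_iff_of_scaling {ζ : Kˣ}
    (hσ : σ RatFunc.X = RatFunc.C (ζ : K) * RatFunc.X) : ζ ∈ scalingSubgroup H ↔ σ ∈ H :=
  ⟨fun ⟨_, hρ, hρX⟩ => algEquiv_ext_of_map_X_eq (hσ.trans hρX.symm) ▸ hρ, fun h => ⟨σ, h, hσ⟩⟩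

lemma mem_scalingSubgroup_iff_of_reflection {ζ : Kˣ} {γ : K} (hγ : γ ≠ 0) (hτ : τ ∈ H)
    (hτX : τ RatFunc.X = RatFunc.C γ / RatFunc.X)
    (hσX : σ RatFunc.X = RatFunc.C (ζ * γ) / RatFunc.X) : ζ ∈ scalingSubgroup H ↔ σ ∈ H := by
  have hCγ : (RatFunc.C γ : RatFunc K) ≠ 0 := by simpa using hγ
  have mul_X : (σ * τ) RatFunc.X = RatFunc.C ((ζ⁻¹ : Kˣ) : K) * RatFunc.X := by
    rw [AlgEquiv.mul_apply, hτX, map_div₀, map_ratFunc_C, hσX, map_mul, Units.val_inv_eq_inv_val,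
      map_inv₀]
    field_simp
  rw [← inv_mem_iff, mem_scalingSubgroup_iff_of_scaling mul_X, H.mul_mem_cancel_right hτ]

variable {d : ℕ} [NeZero d]

lemma eq_fixingSubgroup_adjoin_X_pow (hH : scalingSubgroup H = rootsOfUnity d K)
    (hscaling : ∀ σ ∈ H, ∃ ζ : Kˣ, σ RatFunc.X = RatFunc.C (ζ : K) * RatFunc.X) :
    H = K⟮(RatFunc.X : RatFunc K) ^ d⟯.fixingSubgroup := by
  ext σ
  rw [mem_fixingSubgroup_adjoin_simple_iff, map_X_pow_eq_iff, ← hH]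
  constructor
  · intro hσ
    obtain ⟨ζ, hζ⟩ := hscaling σ hσ
    exact ⟨ζ, (mem_scalingSubgroup_iff_of_scaling hζ).2 hσ, hζ⟩
  · rintro ⟨ζ, hζ, hσX⟩
    exact (mem_scalingSubgroup_iff_of_scaling hσX).1 hζ

lemma eq_fixingSubgroup_adjoin_joukowsky (hH : scalingSubgroup H = rootsOfUnity d K) {β : K}
    (hβ : β ≠ 0) (hτ : τ ∈ H) (hτX : τ RatFunc.X = RatFunc.C (β ^ 2) / RatFunc.X)
    (hdihedral : ∀ σ ∈ H, ∃ ζ : Kˣ, σ RatFunc.X = RatFunc.C (ζ : K) * RatFunc.X ∨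
      σ RatFunc.X = RatFunc.C (ζ : K) / RatFunc.X) :
    H = K⟮joukowsky β d⟯.fixingSubgroup := by
  have hβ2 : β ^ 2 ≠ 0 := pow_ne_zero 2 hβ
  ext σ
  rw [mem_fixingSubgroup_adjoin_simple_iff, map_joukowsky_eq_iff hβ, ← hH]
  constructor
  · intro hσ
    obtain ⟨ζ, hζ | hζ⟩ := hdihedral σ hσ
    · exact ⟨ζ, (mem_scalingSubgroup_iff_of_scaling hζ).2 hσ, .inl hζ⟩
    · have hσX : σ RatFunc.X =
          RatFunc.C (((ζ / Units.mk0 _ hβ2 : Kˣ) : K) * β ^ 2) / RatFunc.X := by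
        rw [hζ, Units.val_div_eq_div_val, Units.val_mk0, div_mul_cancel₀ _ hβ2]
      exact ⟨_, (mem_scalingSubgroup_iff_of_reflection hβ2 hτ hτX hσX).2 hσ, .inr hσX⟩
  · rintro ⟨ζ, hζ, hσX | hσX⟩
    · exact (mem_scalingSubgroup_iff_of_scaling hσX).1 hζ
    · exact (mem_scalingSubgroup_iff_of_reflection hβ2 hτ hτX hσX).1 hζ

end Subgroups

section IntermediateFields

variable {K : Type*} [Field K]

lemma joukowsky_one (n : ℕ) :
    joukowsky (1 : K) n = RatFunc.X ^ n + ((RatFunc.X : RatFunc K) ^ n)⁻¹ := by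
  rw [joukowsky, map_one, div_one]

lemma aeval_joukowsky_dickson {β : K} (hβ : β ≠ 0) (d m : ℕ) :
    aeval (joukowsky β d) (dickson 1 (1 : K) m) = joukowsky β (d * m) := by
  have hX : (RatFunc.X / RatFunc.C β) ^ d ≠ (0 : RatFunc K) :=
    pow_ne_zero d (div_ne_zero RatFunc.X_ne_zero (by simpa using hβ))
  rw [joukowsky, ← eval_map_algebraMap, map_dickson, map_one,
    dickson_one_one_eval_add_inv _ _ (mul_inv_cancel₀ hX), inv_pow, ← pow_mul, joukowsky]

lemma C_pow_mul_joukowsky {β : K} {n : ℕ} (hβ : β ^ (2 * n) = 1) :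
    RatFunc.C (β ^ n) * joukowsky β n = joukowsky 1 n := by
  have hC : (RatFunc.C β : RatFunc K) ^ n * RatFunc.C β ^ n = 1 := by
    rw [← pow_add, ← two_mul, ← map_pow, hβ, map_one]
  have hC0 : (RatFunc.C β : RatFunc K) ^ n ≠ 0 := left_ne_zero_of_mul_eq_one hC
  rw [joukowsky_one, joukowsky, div_pow, inv_div, map_pow, mul_add, mul_div_cancel₀ _ hC0,
    ← mul_div_assoc, hC, one_div]

lemma ratComp_pow_add_inv_X_pow {d n : ℕ} [NeZero d] (hdn : d ∣ n) :
    ratComp (RatFunc.X ^ (n / d) + (RatFunc.X ^ (n / d))⁻¹) (RatFunc.X ^ d) =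
      joukowsky (1 : K) n := by
  have hd : Transcendental K ((RatFunc.X : RatFunc K) ^ d) :=
    RatFunc.transcendental_X.pow (Nat.pos_of_neZero d)
  rw [← ratCompHom_apply hd, map_add, map_inv₀, map_pow, ratCompHom_apply, X_ratComp, ← pow_mul,
    Nat.mul_div_cancel' hdn, joukowsky_one]

lemma ratComp_C_mul_dickson_joukowsky {β : K} {d n : ℕ} (hβ0 : β ≠ 0) (hβ : β ^ (2 * n) = 1)
    (hdn : d ∣ n) :
    ratComp (RatFunc.C (β ^ n) * algebraMap K[X] (RatFunc K) (dickson 1 1 (n / d)))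
      (joukowsky β d) = joukowsky 1 n := by
  rw [← RatFunc.algebraMap_C, ← map_mul, ratComp, RatFunc.eval_algebraMap,
    Algebra.algebraMap_self_apply, eval₂_mul, eval₂_C, ← aeval_def, aeval_joukowsky_dickson hβ0,
    Nat.mul_div_cancel' hdn, RatFunc.algebraMap_eq_C, C_pow_mul_joukowsky hβ]

variable {n : ℕ} [NeZero n]

lemma isGalois_of_joukowsky_mem {ζ : K} (hζ : IsPrimitiveRoot ζ n)
    {E : IntermediateField K (RatFunc K)} (hE : joukowsky 1 n ∈ E) : IsGalois E (RatFunc K) := by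
  have X_pow_ne_inv : (RatFunc.X : RatFunc K) ^ n ≠ (RatFunc.X ^ n)⁻¹ := fun h => by
    have X_pow : (RatFunc.X : RatFunc K) ^ (n * 2) = 1 := by
      rw [pow_mul, sq]
      nth_rw 1 [h]
      exact inv_mul_cancel₀ (pow_ne_zero n RatFunc.X_ne_zero)
    exact RatFunc.transcendental_X.pow (Nat.mul_pos (Nat.pos_of_neZero n) two_pos)
      (X_pow ▸ isAlgebraic_one)
  exact isGalois_of_pow_add_inv_pow_eq (t := ⟨_, hE⟩)
    (hζ.map_of_injective (f := RatFunc.C) RatFunc.C_injective) RatFunc.X_ne_zero X_pow_ne_inv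
    (RatFunc.IntermediateField.adjoin_X E) (joukowsky_one n)

lemma transcendental_joukowsky_one {ζ : K} (hζ : IsPrimitiveRoot ζ n) :
    Transcendental K (joukowsky (1 : K) n) := fun halg => by
  have : IsGalois K⟮joukowsky (1 : K) n⟯ (RatFunc K) :=
    isGalois_of_joukowsky_mem hζ (mem_adjoin_simple_self K _)
  have : Algebra.IsAlgebraic K K⟮joukowsky (1 : K) n⟯ := isAlgebraic_adjoin_simple halg.isIntegral
  have : Algebra.IsAlgebraic K (RatFunc K) := .trans K K⟮joukowsky (1 : K) n⟯ _
  exact RatFunc.transcendental_X (K := K) (Algebra.IsAlgebraic.isAlgebraic _)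

lemma eq_of_fixingSubgroup_eq {ζ : K} (hζ : IsPrimitiveRoot ζ n)
    {E F : IntermediateField K (RatFunc K)} (hE : joukowsky 1 n ∈ E) (hF : joukowsky 1 n ∈ F)
    (h : E.fixingSubgroup = F.fixingSubgroup) : E = F := by
  have := isGalois_of_joukowsky_mem hζ hE
  have := isGalois_of_joukowsky_mem hζ hF
  rw [← fixedField_fixingSubgroup_of_isGalois E, h, fixedField_fixingSubgroup_of_isGalois]

lemma map_X_of_joukowsky_one_mem {E : IntermediateField K (RatFunc K)}
    (hE : joukowsky 1 n ∈ E) {σ : Gal(RatFunc K/K)} (hσ : σ ∈ E.fixingSubgroup) :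
    ∃ ζ ∈ rootsOfUnity n K, σ RatFunc.X = RatFunc.C (ζ : K) * RatFunc.X ∨
      σ RatFunc.X = RatFunc.C (ζ : K) / RatFunc.X := by
  simpa only [one_pow, mul_one] using (map_joukowsky_eq_iff (one_ne_zero (α := K))).1
    ((mem_fixingSubgroup_iff E σ).1 hσ _ hE)

lemma scalingSubgroup_fixingSubgroup_le {E : IntermediateField K (RatFunc K)}
    (hE : joukowsky 1 n ∈ E) : scalingSubgroup E.fixingSubgroup ≤ rootsOfUnity n K := by
  rintro ζ ⟨σ, hσ, hσX⟩
  obtain ⟨η, hη, hσX' | hσX'⟩ := map_X_of_joukowsky_one_mem hE hσ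
  · have hζη : ζ = η :=
      Units.ext (RatFunc.C_injective (mul_right_cancel₀ RatFunc.X_ne_zero (hσX.symm.trans hσX')))
    exact hζη ▸ hη
  · exact absurd (hσX.symm.trans hσX') (C_mul_X_ne_C_div_X ζ.ne_zero)

theorem exists_adjoin_eq_of_joukowsky_mem {ξ : K} (hξ : IsPrimitiveRoot (ξ ^ 2) n)
    {E : IntermediateField K (RatFunc K)} (hE : joukowsky 1 n ∈ E) :
    ∃ d, d ∣ n ∧ (K⟮(RatFunc.X : RatFunc K) ^ d⟯ = E ∨
      ∃ β : K, β ^ (2 * n) = 1 ∧ K⟮joukowsky β d⟯ = E) := by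
  obtain ⟨d, hdn, hd⟩ := exists_dvd_eq_rootsOfUnity (scalingSubgroup_fixingSubgroup_le hE)
  have : NeZero d := ⟨ne_zero_of_dvd_ne_zero (NeZero.ne n) hdn⟩
  refine ⟨d, hdn, ?_⟩
  by_cases hscaling : ∀ σ ∈ E.fixingSubgroup, ∃ ζ : Kˣ,
      σ RatFunc.X = RatFunc.C (ζ : K) * RatFunc.X
  · left
    refine eq_of_fixingSubgroup_eq hξ ?_ hE (eq_fixingSubgroup_adjoin_X_pow hd hscaling).symm
    exact ratComp_pow_add_inv_X_pow (K := K) hdn ▸ ratComp_mem_adjoin _ _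
  · right
    push Not at hscaling
    obtain ⟨τ, hτ, hτ_scaling⟩ := hscaling
    obtain ⟨γ, hγ, hτX⟩ := map_X_of_joukowsky_one_mem hE hτ
    replace hτX := hτX.resolve_left (hτ_scaling γ)
    obtain ⟨i, -, hi⟩ := hξ.eq_pow_of_pow_eq_one ((mem_rootsOfUnity' n γ).1 hγ)
    have hsq : (γ : K) = (ξ ^ i) ^ 2 := by rw [← hi, pow_right_comm]
    have hβ0 : ξ ^ i ≠ 0 := fun h => γ.ne_zero (by rw [hsq, h, zero_pow two_ne_zero])
    have hβ : (ξ ^ i) ^ (2 * n) = 1 := by rw [pow_mul, ← hsq, (mem_rootsOfUnity' n γ).1 hγ]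
    refine ⟨ξ ^ i, hβ, eq_of_fixingSubgroup_eq hξ ?_ hE ?_⟩
    · exact ratComp_C_mul_dickson_joukowsky hβ0 hβ hdn ▸ ratComp_mem_adjoin _ _
    · refine (eq_fixingSubgroup_adjoin_joukowsky hd hβ0 hτ (hsq ▸ hτX) fun σ hσ => ?_).symm
      exact (map_X_of_joukowsky_one_mem hE hσ).imp fun _ => And.right

end IntermediateFields

theorem decompositions_of_x_pow_add_inv_general {K : Type*} [Field K] {n : ℕ} (hn : 0 < n) {ξ : K}
    (hξ : IsPrimitiveRoot (ξ ^ 2) n) {g h : RatFunc K}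
    (hgh : ratComp g h = RatFunc.X ^ n + (RatFunc.X ^ n)⁻¹) :
    ∃ d : ℕ, d ∣ n ∧ ∃ μ ν : RatFunc K, IsLinearFractional μ ∧
      ratComp μ ν = RatFunc.X ∧ ratComp ν μ = RatFunc.X ∧
      ((ratComp g μ = RatFunc.X ^ (n / d) + (RatFunc.X ^ (n / d))⁻¹ ∧
          ratComp ν h = RatFunc.X ^ d) ∨
       (∃ β : K, β ^ (2 * n) = 1 ∧
          ratComp g μ = RatFunc.C (β ^ n) *
            algebraMap K[X] (RatFunc K) (dickson 1 1 (n / d)) ∧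
          ratComp ν h = (RatFunc.X / RatFunc.C β) ^ d + (RatFunc.C β / RatFunc.X) ^ d)) := by
  have : NeZero n := ⟨hn.ne'⟩
  rw [← joukowsky_one] at hgh
  have hf : Transcendental K (ratComp g h) := hgh ▸ transcendental_joukowsky_one hξ
  obtain ⟨d, hdn, hX | ⟨β, hβ, hu⟩⟩ :=
    exists_adjoin_eq_of_joukowsky_mem hξ (hgh ▸ ratComp_mem_adjoin g h)
  · have : NeZero d := ⟨ne_zero_of_dvd_ne_zero hn.ne' hdn⟩
    obtain ⟨μ, ν, hμ, hμν, hνμ, hgμ, hνh⟩ := exists_isLinearFractional_of_adjoin_eq hf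
      ((ratComp_pow_add_inv_X_pow hdn).trans hgh.symm) hX
    exact ⟨d, hdn, μ, ν, hμ, hμν, hνμ, .inl ⟨hgμ, hνh⟩⟩
  · have hβ0 : β ≠ 0 := fun h0 => by simp [h0, hn.ne'] at hβ
    obtain ⟨μ, ν, hμ, hμν, hνμ, hgμ, hνh⟩ := exists_isLinearFractional_of_adjoin_eq hf
      ((ratComp_C_mul_dickson_joukowsky hβ0 hβ hdn).trans hgh.symm) hu
    refine ⟨d, hdn, μ, ν, hμ, hμν, hνμ, .inr ⟨β, hβ, hgμ, ?_⟩⟩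
    rw [hνh, joukowsky, ← inv_pow, inv_div]

theorem decompositions_of_x_pow_add_inv (n : ℕ) (hn : 0 < n) (g h : RatFunc ℂ)
    (hgh : rcomp g h = (RatFunc.X : RatFunc ℂ) ^ n + ((RatFunc.X : RatFunc ℂ) ^ n)⁻¹) :
    ∃ d : ℕ, d ∣ n ∧ ∃ μ ν : RatFunc ℂ, IsMobius μ ∧
      rcomp μ ν = RatFunc.X ∧ rcomp ν μ = RatFunc.X ∧
      ((rcomp g μ = (RatFunc.X : RatFunc ℂ) ^ (n / d) + ((RatFunc.X : RatFunc ℂ) ^ (n / d))⁻¹ ∧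
          rcomp ν h = RatFunc.X ^ d) ∨
       (∃ β : ℂ, β ^ (2 * n) = 1 ∧
          rcomp g μ = RatFunc.C (β ^ n) *
            algebraMap (Polynomial ℂ) (RatFunc ℂ) (Polynomial.dickson 1 (1 : ℂ) (n / d)) ∧
          rcomp ν h = (RatFunc.X / RatFunc.C β) ^ d + (RatFunc.C β / RatFunc.X) ^ d)) := by
  obtain ⟨ξ, hξ⟩ := IsAlgClosed.exists_pow_nat_eq
    (Complex.exp (2 * Real.pi * Complex.I / n)) two_pos
  exact decompositions_of_x_pow_add_inv_general hn (hξ ▸ Complex.isPrimitiveRoot_exp n hn.ne') hgh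
end

section
/- Let σ be the automorphism of ℂ(x) with σ(x) = 1/x, and let h ∈ ℂ(x) satisfy h(1/x) = −h(x) and h(1) = h(−1) = 0, with h having no poles outside {0, ∞}. Then h(x)/(x − 1/x) = q(x + 1/x) for some polynomial q ∈ ℂ[x]. -/
open Polynomial

/-!
Antisymmetry under `x ↦ 1/x` says that the coefficients of `h` satisfy `a₋ₙ = -aₙ`, whence
`h = a₀ + ∑_{n > 0} aₙ (xⁿ - x⁻ⁿ)`. Evaluating at `1` gives `a₀ = h(1) = 0`, and each remaining term
is divisible because `xⁿ - x⁻ⁿ = (x - x⁻¹) Sₙ₋₁(x + x⁻¹)`, where `S` denotes the rescaled Chebyshev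
polynomials of the second kind.
-/

section CommRing

variable {R A : Type*} [CommRing R] [CommRing A] [Algebra R A]

theorem sub_mul_eval_S_eq_pow_sub_pow {x y : A} (hxy : x * y = 1) (n : ℕ) :
    (x - y) * (Chebyshev.S A (n - 1)).eval (x + y) = x ^ n - y ^ n := by
  induction n using Nat.twoStepInduction with
  | zero => simp
  | one => simp
  | more n ih₁ ih₂ =>
    rw [show ((n + 2 : ℕ) : ℤ) - 1 = n - 1 + 2 by lia, Chebyshev.S_add_two,
      show (n : ℤ) - 1 + 1 = (n + 1 : ℕ) - 1 by lia, eval_sub, eval_mul, eval_X]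
    linear_combination (x + y) * ih₂ - ih₁ + (x ^ n - y ^ n) * hxy

theorem exists_aeval_sub_aeval_eq {x y : A} (hxy : x * y = 1) (p : R[X]) :
    ∃ q : R[X], aeval x p - aeval y p = (x - y) * aeval (x + y) q := by
  induction p using Polynomial.induction_on' with
  | add p₁ p₂ h₁ h₂ =>
    obtain ⟨q₁, hq₁⟩ := h₁
    obtain ⟨q₂, hq₂⟩ := h₂
    refine ⟨q₁ + q₂, ?_⟩
    simp only [map_add]
    linear_combination hq₁ + hq₂
  | monomial n a =>
    refine ⟨C a * Chebyshev.S R (n - 1), ?_⟩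
    simp only [aeval_monomial, map_mul, aeval_C, Chebyshev.aeval_S]
    linear_combination -algebraMap R A a * sub_mul_eval_S_eq_pow_sub_pow hxy n

end CommRing

section Laurent

open LaurentPolynomial

theorem coeff_toLaurent_trunc {R : Type*} [Semiring R] (f : R[T;T⁻¹]) (n : ℤ) :
    (toLaurent (trunc f)).coeff n = if 0 ≤ n then f.coeff n else 0 := by
  induction f using LaurentPolynomial.induction_on' with
  | add f g hf hg => split_ifs at hf hg ⊢ <;> simp_all
  | C_mul_T m a =>
    rw [trunc_C_mul_T]
    by_cases hm : 0 ≤ m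
    · lift m to ℕ using hm
      rw [if_pos m.cast_nonneg, Int.toNat_natCast, ← C_mul_X_pow_eq_monomial,
        toLaurent_C_mul_X_pow, ← single_eq_C_mul_T, AddMonoidAlgebra.coeff_single]
      grind
    · rw [if_neg hm, map_zero, ← single_eq_C_mul_T, AddMonoidAlgebra.coeff_single]
      grind [AddMonoidAlgebra.coeff_zero]

theorem aeval_T_one {R : Type*} [CommSemiring R] (p : R[X]) :
    aeval (T 1 : R[T;T⁻¹]) p = toLaurent p := by
  rw [← toLaurent_X, ← coe_toLaurentAlg, aeval_algHom_apply, aeval_X_left_apply]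

theorem eval₂_invert {R S : Type*} [CommSemiring R] [CommSemiring S] (φ : R →+* S) (u : Sˣ)
    (f : R[T;T⁻¹]) : eval₂ φ u (invert f) = eval₂ φ u⁻¹ f := by
  induction f using LaurentPolynomial.induction_on' with
  | add f g hf hg => simp only [map_add, hf, hg]
  | C_mul_T n a => simp

variable {R : Type*} [CommRing R] {f : R[T;T⁻¹]}

theorem eq_C_add_sub_invert_of_invert_eq_neg (hf : invert f = -f) :
    f = LaurentPolynomial.C (f.coeff 0)
      + (toLaurent (trunc f) - invert (toLaurent (trunc f))) := by
  have hcoeff (n : ℤ) : f.coeff (-n) = -f.coeff n := by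
    rw [← invert_apply, hf]; rfl
  ext n
  simp only [AddMonoidAlgebra.coeff_add, AddMonoidAlgebra.coeff_sub, Finsupp.add_apply,
    Finsupp.sub_apply, C_apply, invert_apply, coeff_toLaurent_trunc]
  rcases lt_trichotomy n 0 with hn | rfl | hn
  · simp [hcoeff, hn.ne, hn.le, hn.not_ge]
  · simp
  · simp [hn.ne', hn.le, hn.not_ge]

theorem eval₂_one_eq_coeff_zero_of_invert_eq_neg (hf : invert f = -f) :
    eval₂ (RingHom.id R) 1 f = f.coeff 0 := by
  conv_lhs => rw [eq_C_add_sub_invert_of_invert_eq_neg hf]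
  simp [eval₂_invert]

theorem exists_eq_mul_aeval_of_invert_eq_neg (hf : invert f = -f)
    (h1 : eval₂ (RingHom.id R) 1 f = 0) :
    ∃ q : R[X], f = (T 1 - T (-1)) * aeval (T 1 + T (-1)) q := by
  have hT : (T 1 * T (-1) : R[T;T⁻¹]) = 1 := by rw [← T_add, add_neg_cancel, T_zero]
  obtain ⟨q, hq⟩ := exists_aeval_sub_aeval_eq hT (trunc f)
  refine ⟨q, ?_⟩
  calc
    f = toLaurent (trunc f) - invert (toLaurent (trunc f)) := by
      have hdecomp := eq_C_add_sub_invert_of_invert_eq_neg hf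
      rwa [← eval₂_one_eq_coeff_zero_of_invert_eq_neg hf, h1, map_zero, zero_add] at hdecomp
    _ = aeval (T 1) (trunc f) - aeval (T (-1)) (trunc f) := by
      rw [← aeval_T_one, ← aeval_algHom_apply, invert_T]
    _ = (T 1 - T (-1)) * aeval (T 1 + T (-1)) q := hq

end Laurent

section RatFunc

universe u

open LaurentPolynomial

variable {K L : Type u} [Field K] [Field L]

theorem ratFunc_eval_div (φ : K →+* L) (a : L) (p : K[X]) {q : K[X]}
    (hq : q.eval₂ φ a ≠ 0) :
    RatFunc.eval φ a (algebraMap K[X] (RatFunc K) p / algebraMap K[X] (RatFunc K) q)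
      = p.eval₂ φ a / q.eval₂ φ a := by
  have hq0 : q ≠ 0 := by rintro rfl; simp at hq
  set r := algebraMap K[X] (RatFunc K) p / algebraMap K[X] (RatFunc K) q with hr
  have hdenom : r.denom.eval₂ φ a ≠ 0 := fun h0 ↦
    hq (eval₂_eq_zero_of_dvd_of_eval₂_eq_zero φ a (RatFunc.denom_div_dvd p q) h0)
  have hmul := RatFunc.eval_mul φ a (x := r) (y := algebraMap K[X] (RatFunc K) q) hdenom (by simp)
  rw [hr, div_mul_cancel₀ _ (RatFunc.algebraMap_ne_zero hq0)] at hmul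
  rw [eq_div_iff hq]
  simpa using hmul.symm

variable (K) in
/-- The inclusion of the Laurent polynomials into the rational functions, sending `T` to `X`. It
reduces statements about rational functions with poles only at `0` and `∞` to statements about
coefficients. -/
noncomputable def laurentToRatFunc : K[T;T⁻¹] →ₐ[K] RatFunc K where
  toRingHom := eval₂ (algebraMap K (RatFunc K)) (Units.mk0 RatFunc.X RatFunc.X_ne_zero)
  commutes' a := by rw [← LaurentPolynomial.C_eq_algebraMap]; exact eval₂_C ..

theorem laurentToRatFunc_apply (f : K[T;T⁻¹]) :
    laurentToRatFunc K f
      = eval₂ (algebraMap K (RatFunc K)) (Units.mk0 RatFunc.X RatFunc.X_ne_zero) f :=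
  rfl

theorem laurentToRatFunc_toLaurent_mul_T (p : K[X]) (n : ℕ) :
    laurentToRatFunc K (toLaurent p * T (-n))
      = algebraMap K[X] (RatFunc K) p / RatFunc.X ^ n := by
  rw [laurentToRatFunc_apply, map_mul, eval₂_toLaurent, eval₂_T_neg_n, Units.val_mk0, ← aeval_def,
    RatFunc.aeval_X_left_eq_algebraMap, Units.val_inv_eq_inv_val, Units.val_mk0, inv_pow,
    div_eq_mul_inv]

theorem laurentToRatFunc_injective : Function.Injective (laurentToRatFunc K) := by
  rw [injective_iff_map_eq_zero]
  intro f
  induction f using LaurentPolynomial.induction_on_mul_T with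
  | _ p n =>
  intro h0
  rw [laurentToRatFunc_toLaurent_mul_T, div_eq_zero_iff] at h0
  have hp : p = 0 := by simpa [RatFunc.X_ne_zero] using h0
  rw [hp, map_zero, zero_mul]

theorem ratFunc_eval_laurentToRatFunc (φ : K →+* L) (u : Lˣ) (f : K[T;T⁻¹]) :
    RatFunc.eval φ u (laurentToRatFunc K f) = eval₂ φ u f := by
  induction f using LaurentPolynomial.induction_on_mul_T with
  | _ p n =>
  rw [laurentToRatFunc_toLaurent_mul_T, ← RatFunc.algebraMap_X, ← map_pow,
    ratFunc_eval_div φ u p (by simp)]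
  simp [div_eq_mul_inv]

theorem laurentToRatFunc_invert (f : K[T;T⁻¹]) :
    laurentToRatFunc K (invert f)
      = RatFunc.eval (algebraMap K (RatFunc K)) RatFunc.X⁻¹ (laurentToRatFunc K f) := by
  rw [laurentToRatFunc_apply, eval₂_invert, ← ratFunc_eval_laurentToRatFunc]
  simp

theorem ratFunc_X_sub_inv_ne_zero : (RatFunc.X : RatFunc K) - RatFunc.X⁻¹ ≠ 0 := by
  intro h0
  have hdeg := congrArg RatFunc.intDegree (sub_eq_zero.1 h0)
  norm_num [RatFunc.intDegree_inv, RatFunc.intDegree_X] at hdeg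

end RatFunc

theorem odd_laurent_is_x_sub_inv_times_poly_general {K : Type*} [Field K] {h : RatFunc K}
    (hL : ∃ (p : K[X]) (k : ℕ), h = algebraMap K[X] (RatFunc K) p / RatFunc.X ^ k)
    (hodd : RatFunc.eval (algebraMap K (RatFunc K)) RatFunc.X⁻¹ h = -h)
    (h1 : RatFunc.eval (RingHom.id K) 1 h = 0) :
    ∃ q : K[X], h / (RatFunc.X - RatFunc.X⁻¹) = aeval (RatFunc.X + RatFunc.X⁻¹ : RatFunc K) q := by
  obtain ⟨p, k, rfl⟩ := hL
  rw [← laurentToRatFunc_toLaurent_mul_T] at hodd h1 ⊢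
  set f := toLaurent p * LaurentPolynomial.T (-k)
  rw [← laurentToRatFunc_invert, ← map_neg] at hodd
  have hf : LaurentPolynomial.invert f = -f := laurentToRatFunc_injective hodd
  have hf1 : LaurentPolynomial.eval₂ (RingHom.id K) 1 f = 0 := by
    rw [← ratFunc_eval_laurentToRatFunc, Units.val_one, h1]
  obtain ⟨q, hq⟩ := exists_eq_mul_aeval_of_invert_eq_neg hf hf1
  refine ⟨q, ?_⟩
  rw [div_eq_iff ratFunc_X_sub_inv_ne_zero, hq, map_mul, ← aeval_algHom_apply, mul_comm]
  simp [laurentToRatFunc_apply]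

theorem odd_laurent_is_x_sub_inv_times_poly (h : RatFunc ℂ)
    (hL : IsLaurent h)
    (hodd : rcomp h (RatFunc.X)⁻¹ = -h)
    (h1 : RatFunc.eval (RingHom.id ℂ) 1 h = 0)
    (hm1 : RatFunc.eval (RingHom.id ℂ) (-1) h = 0) :
    ∃ q : Polynomial ℂ,
      h / ((RatFunc.X : RatFunc ℂ) - (RatFunc.X : RatFunc ℂ)⁻¹)
        = Polynomial.aeval ((RatFunc.X : RatFunc ℂ) + (RatFunc.X : RatFunc ℂ)⁻¹) q :=
  odd_laurent_is_x_sub_inv_times_poly_general hL hodd h1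
end
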